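/- arXiv:2207.06993 — 2 statements merged into one kernel-verified Lean document; each statement's English description precedes it below -/
import Mathlib

section
/- For any relational frame (X,◁), the following are equivalent: (a) every c_◁-fixpoint A satisfies ¬_◁¬_◁A ⊆ A; (b) for all x ∈ X and all y with y ◁ x, there exists y' with y' ◁ x such that for all z ∈ X, z ◁ y' implies y ◁ z. -/
/-- The closure operation `c_◁` on subsets of a relational frame `(X, ◁)`. -/
def cl {X : Type*} (lt : X → X → Prop) (A : Set X) : Set X :=
  {x | ∀ x', lt x' x → ∃ x'', lt x' x'' ∧ x'' ∈ A}

/-- The negation operation `¬_◁` on subsets of a relational frame `(X, ◁)`. -/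
def negSet {X : Type*} (lt : X → X → Prop) (A : Set X) : Set X :=
  {x | ∀ y, lt y x → y ∉ A}

/-!
The operation `c_◁` is `¬_◁ ∘ ¬_▷`, the double polar of the complement of `◁`, so its fixpoints are
exactly the sets `¬_◁ B`. Condition (a) thus says that `¬_◁¬_◁¬_◁ B ⊆ ¬_◁ B` for all `B`. Since
`¬_◁` is antitone and turns unions into intersections, it is enough to check this on singletons
`B = {y}`, where unfolding the membership conditions gives (b).
-/

section

variable {X : Type*} {lt : X → X → Prop}

theorem notMem_negSet {A : Set X} {x : X} : x ∉ negSet lt A ↔ ∃ y, lt y x ∧ y ∈ A := by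
  simp [negSet]

variable (lt)

theorem cl_eq_negSet_negSet_swap (A : Set X) : cl lt A = negSet lt (negSet (Function.swap lt) A) :=
  Set.ext fun _ ↦ forall₂_congr fun _ _ ↦ (notMem_negSet (lt := Function.swap lt)).symm

theorem negSet_eq_upperPolar (A : Set X) : negSet lt A = upperPolar (fun y x ↦ ¬ lt y x) A :=
  Set.ext fun _ ↦ forall_congr' fun _ ↦ imp_not_comm

theorem negSet_swap_eq_lowerPolar (A : Set X) :
    negSet (Function.swap lt) A = lowerPolar (fun y x ↦ ¬ lt y x) A :=
  negSet_eq_upperPolar (Function.swap lt) A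

theorem negSet_anti : Antitone (negSet lt) :=
  funext (negSet_eq_upperPolar lt) ▸ upperPolar_anti _

variable {lt}

theorem cl_eq_self_iff_mem_range_negSet {A : Set X} :
    cl lt A = A ↔ A ∈ Set.range (negSet lt) := by
  rw [cl_eq_negSet_negSet_swap, negSet_swap_eq_lowerPolar lt, funext (negSet_eq_upperPolar lt)]
  exact Order.isIntent_iff.symm

theorem mem_negSet_singleton {x y : X} : x ∈ negSet lt {y} ↔ ¬ lt y x := by
  rw [negSet_eq_upperPolar, mem_upperPolar_singleton]

theorem mem_negSet_negSet_singleton {x y : X} :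
    x ∈ negSet lt (negSet lt {y}) ↔ ∀ z, lt z x → lt y z :=
  forall₂_congr fun _ _ ↦ mem_negSet_singleton.not_left

theorem negSet_negSet_negSet_singleton_subset_iff {y : X} :
    negSet lt (negSet lt (negSet lt {y})) ⊆ negSet lt {y} ↔
      ∀ x, lt y x → ∃ y', lt y' x ∧ ∀ z, lt z y' → lt y z := by
  refine forall_congr' fun x ↦ ?_
  rw [mem_negSet_singleton, imp_not_comm, notMem_negSet]
  simp only [mem_negSet_negSet_singleton]

theorem forall_negSet_negSet_negSet_subset_iff_singleton :
    (∀ B, negSet lt (negSet lt (negSet lt B)) ⊆ negSet lt B) ↔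
      ∀ y, negSet lt (negSet lt (negSet lt {y})) ⊆ negSet lt {y} := by
  refine ⟨fun h y ↦ h {y}, fun h B x hx y hyx hyB ↦ ?_⟩
  have hanti : Antitone (negSet lt ∘ negSet lt ∘ negSet lt) :=
    ((negSet_anti lt).comp (negSet_anti lt)).comp_antitone (negSet_anti lt)
  have hxy : x ∈ negSet lt {y} := h y (hanti (Set.singleton_subset_iff.mpr hyB) hx)
  exact mem_negSet_singleton.mp hxy hyx

end

theorem stmt_10 (X : Type*) [Nonempty X] (lt : X → X → Prop) :
    (∀ A : Set X, cl lt A = A → negSet lt (negSet lt A) ⊆ A) ↔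
    (∀ x y : X, lt y x → ∃ y', lt y' x ∧ ∀ z, lt z y' → lt y z) := by
  calc (∀ A : Set X, cl lt A = A → negSet lt (negSet lt A) ⊆ A)
    _ ↔ ∀ B, negSet lt (negSet lt (negSet lt B)) ⊆ negSet lt B := by
      simp only [cl_eq_self_iff_mem_range_negSet, Set.forall_mem_range]
    _ ↔ ∀ y, negSet lt (negSet lt (negSet lt {y})) ⊆ negSet lt {y} :=
      forall_negSet_negSet_negSet_subset_iff_singleton
    _ ↔ ∀ y x, lt y x → ∃ y', lt y' x ∧ ∀ z, lt z y' → lt y z :=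
      forall_congr' fun _ ↦ negSet_negSet_negSet_singleton_subset_iff
    _ ↔ ∀ x y, lt y x → ∃ y', lt y' x ∧ ∀ z, lt z y' → lt y z := forall_comm
end

section
/- Let L be a bounded lattice, V a join-dense set of elements of L, Λ a meet-dense set of elements of L, and ¬ a weak pseudocomplementation on L. Let P = {(a,¬a) : a ∈ V, a ≠ 0} ∪ {(1,b) : b ∈ Λ, b ≠ 1}, with (a,b) ◁ (c,d) iff c ≰ b. Then the map f(a) = {(x,y) ∈ P : x ≤ a} is a complete embedding of (L,¬) into (𝔏(P,◁), ¬_◁); the relation ◁ is reflexive and pseudosymmetric, and strongly pseudosymmetric if V = L; if moreover ¬ is a pseudocomplementation, then ◁ is weakly compossible; and if L is complete, the embedding is an isomorphism. -/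
/-- `x` pre-refines `y`: everything open to `x` is open to `y`. -/
def preRefines {X : Type*} (lt : X → X → Prop) (x y : X) : Prop :=
  ∀ z, lt z x → lt z y

/-- `x` is absurd: nothing is open to `x`. -/
def IsAbsurd {X : Type*} (lt : X → X → Prop) (x : X) : Prop :=
  ¬ ∃ y, lt y x

/-- `◁` is pseudosymmetric: whenever `y ◁ x`, some `z ◁ y` pre-refines `x`. -/
def Pseudosymmetric {X : Type*} (lt : X → X → Prop) : Prop :=
  ∀ x y, lt y x → ∃ z, lt z y ∧ preRefines lt z x

/-- `◁` is strongly pseudosymmetric: whenever `y ◁ x`, some `z ◁ y` pre-refines `x`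
and is pre-refined by `x`. -/
def StronglyPseudosymmetric {X : Type*} (lt : X → X → Prop) : Prop :=
  ∀ x y, lt y x → ∃ z, lt z y ∧ preRefines lt z x ∧ preRefines lt x z

/-- `◁` is weakly compossible: whenever `y ◁ x`, some non-absurd `z` pre-refines
both `y` and `x`. -/
def WeaklyCompossible {X : Type*} (lt : X → X → Prop) : Prop :=
  ∀ x y, lt y x → ∃ z, ¬ IsAbsurd lt z ∧ preRefines lt z y ∧ preRefines lt z x

/-- The relation `◁` on a set `P` of pairs of lattice elements: `(a,b) ◁ (c,d)` iff `c ≰ b`. -/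
def ltP {L : Type*} [Lattice L] (P : Set (L × L)) : ↥P → ↥P → Prop :=
  fun p q => ¬ (q.1.1 ≤ p.1.2)

/-- The map `f(a) = {(x,y) ∈ P : x ≤ a}`. -/
def emb {L : Type*} [Lattice L] (P : Set (L × L)) (a : L) : Set ↥P :=
  {p | p.1.1 ≤ a}

/-- The set of pairs `P = {(a,¬a) : a ∈ V, a ≠ 0} ∪ {(1,b) : b ∈ Λ, b ≠ 1}`. -/
def Pweak {L : Type*} [Lattice L] [BoundedOrder L] (neg : L → L) (V Λ : Set L) :
    Set (L × L) :=
  {p | (∃ a ∈ V, a ≠ ⊥ ∧ p = (a, neg a)) ∨ (∃ b ∈ Λ, b ≠ ⊤ ∧ p = ((⊤ : L), b))}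

/-!
Since `(a, b) ◁ (c, d)` fails exactly when `c ≤ b`, a pair lies in `c_◁(A)` iff its first coordinate
lies below every second coordinate that bounds the first coordinates of `A`. When second
coordinates are meet-dense this says `c_◁(A) = f(⋁ A)`, and when first coordinates are join-dense
`a` is the join of the first coordinates of `f(a)`; so `f` identifies `L` with the fixpoints whose
first coordinates have a join.
The claims about negation rest on `¬a ≤ b` for every `(a, b) ∈ P` and on the fact that
`a ≤ ¬b ↔ b ≤ ¬a`.
-/

section Dense

variable {α : Type*} [Preorder α] {V : Set α}

/-- Join-density: every element is the join of a possibly infinite subset of `V`. -/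
def JoinDense (V : Set α) : Prop :=
  ∀ a, ∃ S ⊆ V, IsLUB S a

/-- Meet-density: every element is the meet of a possibly infinite subset of `V`. -/
def MeetDense (V : Set α) : Prop :=
  ∀ a, ∃ S ⊆ V, IsGLB S a

theorem joinDense_iff : JoinDense V ↔ ∀ ⦃a b⦄, ¬a ≤ b → ∃ v ∈ V, v ≤ a ∧ ¬v ≤ b := by
  refine ⟨fun hV a b hab => ?_, fun hV a => ⟨{v ∈ V | v ≤ a}, Set.sep_subset _ _, ?_⟩⟩
  · obtain ⟨S, hSV, hS⟩ := hV a
    by_contra! hb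
    exact hab (hS.2 fun v hv => hb v (hSV hv) (hS.1 hv))
  · refine ⟨fun v hv => hv.2, fun b hb => ?_⟩
    by_contra hab
    obtain ⟨v, hv, hva, hvb⟩ := hV hab
    exact hvb (hb ⟨hv, hva⟩)

theorem meetDense_iff : MeetDense V ↔ ∀ ⦃a b⦄, ¬a ≤ b → ∃ v ∈ V, b ≤ v ∧ ¬a ≤ v :=
  (joinDense_iff (α := αᵒᵈ) (V := V)).trans forall_comm

end Dense

theorem StronglyPseudosymmetric.pseudosymmetric {X : Type*} {lt : X → X → Prop}
    (h : StronglyPseudosymmetric lt) : Pseudosymmetric lt := fun x y hyx =>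
  let ⟨z, hzy, hzx, _⟩ := h x y hyx
  ⟨z, hzy, hzx⟩

section PairFrame

variable {L : Type*} [Lattice L] {P : Set (L × L)} {A : Set P} {a : L}

theorem mem_cl_ltP_iff {x : P} :
    x ∈ cl (ltP P) A ↔ ∀ p : P, (∀ q ∈ A, q.1.1 ≤ p.1.2) → x.1.1 ≤ p.1.2 := by
  refine forall_congr' fun p => ?_
  rw [← not_imp_not]
  simp only [ltP, not_not, not_exists, not_and', not_not]

theorem preRefines_ltP_of_fst_le {x y : P} (h : x.1.1 ≤ y.1.1) : preRefines (ltP P) x y :=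
  fun _ hzx hyz => hzx (h.trans hyz)

theorem cl_ltP_eq_emb (hsnd : MeetDense (Prod.snd '' P))
    (ha : IsLUB ((fun p : P => p.1.1) '' A) a) : cl (ltP P) A = emb P a := by
  ext x
  rw [mem_cl_ltP_iff]
  constructor
  · intro hx
    by_contra hxa
    obtain ⟨_, ⟨p, hp, rfl⟩, hap, hxp⟩ := meetDense_iff.1 hsnd hxa
    exact hxp (hx ⟨p, hp⟩ fun q hq => (ha.1 ⟨q, hq, rfl⟩).trans hap)
  · exact fun hxa p hAp => le_trans hxa (ha.2 (Set.forall_mem_image.2 hAp))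

theorem isLUB_fst_image_emb (hfst : JoinDense (Prod.fst '' P)) (a : L) :
    IsLUB ((fun p : P => p.1.1) '' emb P a) a := by
  refine ⟨Set.forall_mem_image.2 fun _ hp => hp, fun b hb => ?_⟩
  by_contra hab
  obtain ⟨_, ⟨p, hp, rfl⟩, hpa, hpb⟩ := joinDense_iff.1 hfst hab
  exact hpb (hb ⟨⟨p, hp⟩, hpa, rfl⟩)

theorem emb_injective (hfst : JoinDense (Prod.fst '' P)) : Function.Injective (emb P) :=
  fun a b hab => (isLUB_fst_image_emb hfst a).unique (hab ▸ isLUB_fst_image_emb hfst b)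

theorem cl_ltP_emb (hfst : JoinDense (Prod.fst '' P)) (hsnd : MeetDense (Prod.snd '' P)) (a : L) :
    cl (ltP P) (emb P a) = emb P a :=
  cl_ltP_eq_emb hsnd (isLUB_fst_image_emb hfst a)

theorem emb_eq_biInter_of_isGLB {S : Set L} (ha : IsGLB S a) : emb P a = ⋂ s ∈ S, emb P s := by
  ext x
  simp only [Set.mem_iInter₂]
  exact le_isGLB_iff ha

theorem emb_eq_cl_biUnion_of_isLUB (hfst : JoinDense (Prod.fst '' P))
    (hsnd : MeetDense (Prod.snd '' P)) {S : Set L} (ha : IsLUB S a) :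
    emb P a = cl (ltP P) (⋃ s ∈ S, emb P s) := by
  refine (cl_ltP_eq_emb hsnd (isLUB_iff_le_iff.2 fun b => ?_)).symm
  simp only [Set.image_iUnion₂, upperBounds_iUnion, Set.mem_iInter,
    ← isLUB_le_iff (isLUB_fst_image_emb hfst _)]
  exact isLUB_le_iff ha

theorem exists_emb_eq_of_cl_ltP_eq (hsnd : MeetDense (Prod.snd '' P))
    (hL : ∀ S : Set L, ∃ a, IsLUB S a) (hA : cl (ltP P) A = A) : ∃ a, emb P a = A :=
  let ⟨a, ha⟩ := hL ((fun p : P => p.1.1) '' A)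
  ⟨a, (cl_ltP_eq_emb hsnd ha).symm.trans hA⟩

end PairFrame

/-- A weak pseudocomplementation: an antitone semicomplementation lying below its double. -/
structure IsWeakPseudocomplementation {L : Type*} [SemilatticeInf L] [OrderBot L]
    (neg : L → L) : Prop where
  antitone : Antitone neg
  inf_neg_self : ∀ a, a ⊓ neg a = ⊥
  le_neg_neg : ∀ a, a ≤ neg (neg a)

namespace IsWeakPseudocomplementation

variable {L : Type*} [SemilatticeInf L] [OrderBot L] {neg : L → L} {a b : L}

theorem le_neg_comm (h : IsWeakPseudocomplementation neg) : a ≤ neg b ↔ b ≤ neg a :=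
  ⟨fun hab => (h.le_neg_neg b).trans (h.antitone hab),
    fun hba => (h.le_neg_neg a).trans (h.antitone hba)⟩

theorem neg_top [OrderTop L] (h : IsWeakPseudocomplementation neg) : neg ⊤ = ⊥ := by
  simpa only [top_inf_eq] using h.inf_neg_self ⊤

theorem eq_bot_of_le_neg (h : IsWeakPseudocomplementation neg) (ha : a ≤ neg a) : a = ⊥ := by
  simpa only [inf_eq_left.2 ha] using h.inf_neg_self a

end IsWeakPseudocomplementation

namespace Pweak

variable {L : Type*} [Lattice L] [BoundedOrder L] {V Λ : Set L} {neg : L → L}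

theorem mk_neg_mem {v : L} (hv : v ∈ V) (hv₀ : v ≠ ⊥) : (v, neg v) ∈ Pweak neg V Λ :=
  Or.inl ⟨v, hv, hv₀, rfl⟩

theorem top_mk_mem {b : L} (hb : b ∈ Λ) (hb₁ : b ≠ ⊤) : (⊤, b) ∈ Pweak neg V Λ :=
  Or.inr ⟨b, hb, hb₁, rfl⟩

theorem joinDense_fst_image (hV : JoinDense V) : JoinDense (Prod.fst '' Pweak neg V Λ) := by
  refine joinDense_iff.2 fun a b hab => ?_
  obtain ⟨v, hv, hva, hvb⟩ := joinDense_iff.1 hV hab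
  have hv₀ : v ≠ ⊥ := fun h => hvb (h.trans_le bot_le)
  exact ⟨v, ⟨_, mk_neg_mem hv hv₀, rfl⟩, hva, hvb⟩

theorem meetDense_snd_image (hΛ : MeetDense Λ) : MeetDense (Prod.snd '' Pweak neg V Λ) := by
  refine meetDense_iff.2 fun a b hab => ?_
  obtain ⟨l, hl, hbl, hal⟩ := meetDense_iff.1 hΛ hab
  have hl₁ : l ≠ ⊤ := fun h => hal (le_top.trans_eq h.symm)
  exact ⟨l, ⟨_, top_mk_mem hl hl₁, rfl⟩, hbl, hal⟩

theorem neg_fst_le_snd (hneg : IsWeakPseudocomplementation neg) (p : Pweak neg V Λ) :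
    neg p.1.1 ≤ p.1.2 := by
  obtain ⟨_, ⟨v, -, -, rfl⟩ | ⟨b, -, -, rfl⟩⟩ := p
  · exact le_rfl
  · exact hneg.neg_top.trans_le bot_le

theorem ltP_self (hneg : IsWeakPseudocomplementation neg) (p : Pweak neg V Λ) : ltP _ p p := by
  obtain ⟨_, ⟨v, -, hv₀, rfl⟩ | ⟨b, -, hb₁, rfl⟩⟩ := p
  · exact fun hle => hv₀ (hneg.eq_bot_of_le_neg hle)
  · exact fun hle => hb₁ (top_le_iff.1 hle)

theorem emb_neg (hneg : IsWeakPseudocomplementation neg) (hV : JoinDense V) (a : L) :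
    emb (Pweak neg V Λ) (neg a) = negSet (ltP (Pweak neg V Λ)) (emb (Pweak neg V Λ) a) := by
  ext x
  constructor
  · intro hxa y hyx hya
    have hxy : x.1.1 ≤ neg y.1.1 := le_trans hxa (hneg.antitone hya)
    exact hyx (hxy.trans (neg_fst_le_snd hneg y))
  · intro hx
    refine hneg.le_neg_comm.1 ?_
    by_contra hax
    obtain ⟨v, hv, hva, hvx⟩ := joinDense_iff.1 hV hax
    have hv₀ : v ≠ ⊥ := fun h => hvx (h.trans_le bot_le)
    exact hx ⟨_, mk_neg_mem hv hv₀⟩ (fun hxv => hvx (hneg.le_neg_comm.1 hxv)) hva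

/-- Given `y ◁ (1, b)`, the witness is `(1, l)` with `l ∈ Λ` not above the first coordinate of `y`;
given `y ◁ (a, ¬a)`, it is `(a, ¬a)` itself. -/
theorem stronglyPseudosymmetric_ltP (hneg : IsWeakPseudocomplementation neg) (hΛ : MeetDense Λ) :
    StronglyPseudosymmetric (ltP (Pweak neg V Λ)) := by
  intro x y hyx
  suffices h : ∃ z : Pweak neg V Λ, ltP _ z y ∧ z.1.1 = x.1.1 by
    obtain ⟨z, hzy, hzx⟩ := h
    exact ⟨z, hzy, preRefines_ltP_of_fst_le hzx.le, preRefines_ltP_of_fst_le hzx.ge⟩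
  obtain ⟨_, ⟨v, hv, hv₀, rfl⟩ | ⟨b, -, -, rfl⟩⟩ := x
  · refine ⟨⟨_, mk_neg_mem hv hv₀⟩, fun hyv => hyx ?_, rfl⟩
    exact (hneg.le_neg_comm.1 hyv).trans (neg_fst_le_snd hneg y)
  · have hy₀ : ¬y.1.1 ≤ ⊥ := fun hy => ltP_self hneg y (hy.trans bot_le)
    obtain ⟨l, hl, -, hyl⟩ := meetDense_iff.1 hΛ hy₀
    have hl₁ : l ≠ ⊤ := fun h => hyl (le_top.trans_eq h.symm)
    exact ⟨⟨_, top_mk_mem hl hl₁⟩, hyl, rfl⟩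

theorem weaklyCompossible_ltP (hneg : IsWeakPseudocomplementation neg)
    (hmax : ∀ a b, a ⊓ b = ⊥ → b ≤ neg a) (hV : JoinDense V) :
    WeaklyCompossible (ltP (Pweak neg V Λ)) := by
  intro x y hyx
  have hinf : ¬y.1.1 ⊓ x.1.1 ≤ ⊥ := fun h =>
    hyx ((hmax _ _ (le_bot_iff.1 h)).trans (neg_fst_le_snd hneg y))
  obtain ⟨_, ⟨z, hz, rfl⟩, hzinf, -⟩ := joinDense_iff.1 (joinDense_fst_image hV) hinf
  obtain ⟨hzy, hzx⟩ := le_inf_iff.1 hzinf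
  exact ⟨⟨z, hz⟩, fun habs => habs ⟨_, ltP_self hneg _⟩,
    preRefines_ltP_of_fst_le hzy, preRefines_ltP_of_fst_le hzx⟩

end Pweak

theorem stmt_13_general {L : Type*} [Lattice L] [BoundedOrder L] {V Λ : Set L} {neg : L → L}
    (hV : JoinDense V) (hΛ : MeetDense Λ) (hneg : IsWeakPseudocomplementation neg) :
    Function.Injective (emb (Pweak neg V Λ)) ∧
    (∀ a : L, cl (ltP (Pweak neg V Λ)) (emb (Pweak neg V Λ) a) = emb (Pweak neg V Λ) a) ∧
    (∀ (S : Set L) (a : L), IsGLB S a →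
      emb (Pweak neg V Λ) a = ⋂ s ∈ S, emb (Pweak neg V Λ) s) ∧
    (∀ (S : Set L) (a : L), IsLUB S a →
      emb (Pweak neg V Λ) a = cl (ltP (Pweak neg V Λ)) (⋃ s ∈ S, emb (Pweak neg V Λ) s)) ∧
    (∀ a : L, emb (Pweak neg V Λ) (neg a) =
      negSet (ltP (Pweak neg V Λ)) (emb (Pweak neg V Λ) a)) ∧
    Std.Refl (ltP (Pweak neg V Λ)) ∧
    StronglyPseudosymmetric (ltP (Pweak neg V Λ)) ∧
    ((∀ a : L, IsGreatest {y : L | a ⊓ y = ⊥} (neg a)) →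
      WeaklyCompossible (ltP (Pweak neg V Λ))) ∧
    ((∀ S : Set L, ∃ a : L, IsLUB S a) →
      ∀ A : Set ↥(Pweak neg V Λ), cl (ltP (Pweak neg V Λ)) A = A →
        ∃ a : L, emb (Pweak neg V Λ) a = A) := by
  have hfst : JoinDense (Prod.fst '' Pweak neg V Λ) := Pweak.joinDense_fst_image hV
  have hsnd : MeetDense (Prod.snd '' Pweak neg V Λ) := Pweak.meetDense_snd_image hΛ
  exact ⟨emb_injective hfst,
    cl_ltP_emb hfst hsnd,
    fun _ _ => emb_eq_biInter_of_isGLB,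
    fun _ _ => emb_eq_cl_biUnion_of_isLUB hfst hsnd,
    Pweak.emb_neg hneg hV,
    ⟨Pweak.ltP_self hneg⟩,
    Pweak.stronglyPseudosymmetric_ltP hneg hΛ,
    fun hpc => Pweak.weaklyCompossible_ltP hneg (fun a _ hab => (hpc a).2 hab) hV,
    fun hL _ => exists_emb_eq_of_cl_ltP_eq hsnd hL⟩

/-- Representation of a bounded lattice with a weak pseudocomplementation `¬` (an antitone
semicomplementation satisfying `a ≤ ¬¬a`): the map `f` is a complete embedding of `(L,¬)`
into `(𝔏(P,◁), ¬_◁)`; `◁` is reflexive and pseudosymmetric, and strongly pseudosymmetric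
if `V = L`; if moreover `¬` is a pseudocomplementation, then `◁` is weakly compossible;
and if `L` is complete, the embedding is an isomorphism (surjective onto the fixpoints). -/
theorem stmt_13 {L : Type*} [Lattice L] [BoundedOrder L] (V Λ : Set L) (neg : L → L)
    (hV : ∀ a : L, ∃ S : Set L, S ⊆ V ∧ IsLUB S a)
    (hΛ : ∀ a : L, ∃ S : Set L, S ⊆ Λ ∧ IsGLB S a)
    (hanti : ∀ a b : L, a ≤ b → neg b ≤ neg a)
    (hsemi : ∀ a : L, a ⊓ neg a = ⊥)
    (hdni : ∀ a : L, a ≤ neg (neg a)) :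
    Function.Injective (emb (Pweak neg V Λ)) ∧
    (∀ a : L, cl (ltP (Pweak neg V Λ)) (emb (Pweak neg V Λ) a) = emb (Pweak neg V Λ) a) ∧
    (∀ (S : Set L) (a : L), IsGLB S a →
      emb (Pweak neg V Λ) a = ⋂ s ∈ S, emb (Pweak neg V Λ) s) ∧
    (∀ (S : Set L) (a : L), IsLUB S a →
      emb (Pweak neg V Λ) a = cl (ltP (Pweak neg V Λ)) (⋃ s ∈ S, emb (Pweak neg V Λ) s)) ∧
    (∀ a : L, emb (Pweak neg V Λ) (neg a) =
      negSet (ltP (Pweak neg V Λ)) (emb (Pweak neg V Λ) a)) ∧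
    Reflexive (ltP (Pweak neg V Λ)) ∧
    Pseudosymmetric (ltP (Pweak neg V Λ)) ∧
    (V = Set.univ → StronglyPseudosymmetric (ltP (Pweak neg V Λ))) ∧
    ((∀ a : L, IsGreatest {y : L | a ⊓ y = ⊥} (neg a)) →
      WeaklyCompossible (ltP (Pweak neg V Λ))) ∧
    ((∀ S : Set L, ∃ a : L, IsLUB S a) →
      ∀ A : Set ↥(Pweak neg V Λ), cl (ltP (Pweak neg V Λ)) A = A →
        ∃ a : L, emb (Pweak neg V Λ) a = A) := by
  obtain ⟨hinj, hcl, hinf, hsup, hneg, hrefl, hstrong, hrest⟩ :=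
    stmt_13_general hV hΛ ⟨hanti, hsemi, hdni⟩
  exact ⟨hinj, hcl, hinf, hsup, hneg, hrefl.refl, hstrong.pseudosymmetric, fun _ => hstrong, hrest⟩
end
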